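/- For every ε > 0 there exists a constant C_ε > 0 such that for all u, v ∈ V, |b(k_ε u, v, u)| ≤ C_ε ‖u‖ · |u| · ‖v‖, where |·| is the L²(G) norm and ‖·‖ is the W^{1,2}_0(G) norm. -/

import Mathlib

open MeasureTheory Filter Topology ENNReal

noncomputable section

abbrev E3 := EuclideanSpace ℝ (Fin 3)

/-- The standard mollifier on `ℝ³` with normalizing constant `C`. -/
def stdMollifier (C : ℝ) (x : E3) : ℝ :=
  if ‖x‖ < 1 then C * Real.exp (1 / (‖x‖ ^ 2 - 1)) else 0

/-- The rescaled mollifier `η_ε`. -/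
def mollifier (C ε : ℝ) (x : E3) : ℝ := (1 / ε ^ 3) * stdMollifier C (ε⁻¹ • x)

/-- Mollification `k_ε u = η_ε ∗ u` of a vector field (componentwise convolution). -/
def mollify (C ε : ℝ) (u : E3 → E3) : E3 → E3 :=
  convolution (mollifier C ε) u (ContinuousLinearMap.lsmul ℝ ℝ) volume

/-- The Navier–Stokes trilinear form `b(u,v,w) = ∑_{i,j} ∫_G uᵢ ∂ᵢvⱼ wⱼ dx`. -/
def triForm (G : Set E3) (u v w : E3 → E3) : ℝ :=
  ∑ i : Fin 3, ∑ j : Fin 3,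
    ∫ x in G, u x i * fderiv ℝ v x (EuclideanSpace.single i 1) j * w x j

/-- Membership in `𝒱`: a smooth, compactly supported, divergence-free vector field on `G`. -/
def MemCalV (G : Set E3) (u : E3 → E3) : Prop :=
  ContDiff ℝ (⊤ : ℕ∞) u ∧ HasCompactSupport u ∧ tsupport u ⊆ G ∧
    ∀ x, ∑ i : Fin 3, fderiv ℝ u x (EuclideanSpace.single i 1) i = 0

/-- Membership in `V`, the closure of `𝒱` in `W^{1,2}₀(G)` (elements extended by zero to
all of `ℝ³`). -/
def MemV (G : Set E3) (u : E3 → E3) : Prop :=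
  (∀ x ∉ G, u x = 0) ∧
  ∃ φ : ℕ → E3 → E3, (∀ n, MemCalV G (φ n)) ∧
    Tendsto (fun n =>
      eLpNorm (fun x => u x - φ n x) 2 volume +
      eLpNorm (fun x => fderiv ℝ u x - fderiv ℝ (φ n) x) 2 volume) atTop (𝓝 0)


/-- The `H`-norm `|u|`, i.e. the `L²(G)` norm. -/
def Hnorm (G : Set E3) (u : E3 → E3) : ℝ≥0∞ := eLpNorm u 2 (volume.restrict G)

/-- The `V`-norm `‖u‖`, i.e. the `W^{1,2}₀(G)` norm. -/
def Vnorm (G : Set E3) (u : E3 → E3) : ℝ≥0∞ :=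
  eLpNorm u 2 (volume.restrict G) +
    eLpNorm (fun x => fderiv ℝ u x) 2 (volume.restrict G)

/-!
Since `v` enters only through its gradient, the form is controlled by
`‖k_ε u‖_∞ ‖∇v‖_{L²} ‖u‖_{L²}`.  The mollifier is continuous with compact support, so it lies in
`L²(ℝ³)`, and Cauchy–Schwarz in the convolution gives `‖k_ε u‖_∞ ≤ ‖η_ε‖_{L²} ‖u‖_{L²}`; one of
the two factors `‖u‖_{L²}` is then estimated by `‖u‖_V`.
-/

section Holder

variable {α E F : Type*} [MeasurableSpace α] [NormedAddCommGroup E] [NormedAddCommGroup F]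
  {μ : Measure α}

-- `eLpNorm` is built from a lower integral, so `MemV` does not force measurability:
-- Mathlib's Hölder inequality, which asks for it in both factors, is not enough.
theorem lintegral_enorm_mul_enorm_le_eLpNorm_mul_eLpNorm (p q : ℝ≥0∞) [p.HolderConjugate q]
    {f : α → E} (hf : AEStronglyMeasurable f μ) (g : α → F) :
    ∫⁻ x, ‖f x‖ₑ * ‖g x‖ₑ ∂μ ≤ eLpNorm f p μ * eLpNorm g q μ := by
  -- A measurable `h ≤ ‖f‖ₑ * ‖g‖ₑ` with the same integral makes `h / ‖f‖ₑ` a measurable minorant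
  -- of `‖g‖ₑ`, to which the usual Hölder inequality applies.
  obtain ⟨h, h_meas, h_le, lintegral_eq⟩ := exists_measurable_le_lintegral_eq (μ := μ)
    (fun x ↦ ‖f x‖ₑ * ‖g x‖ₑ)
  have div_le (x : α) : h x / ‖f x‖ₑ ≤ ‖g x‖ₑ := ENNReal.div_le_of_le_mul' (h_le x)
  have le_mul_div (x : α) : h x ≤ ‖f x‖ₑ * (h x / ‖f x‖ₑ) := by
    rcases eq_or_ne ‖f x‖ₑ 0 with hfx | hfx
    · simpa only [hfx, zero_mul] using h_le x
    · exact (ENNReal.mul_div_cancel hfx enorm_ne_top).ge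
  let k : α → ℝ := fun x ↦ (h x / ‖f x‖ₑ).toReal
  have enorm_k (x : α) : ‖k x‖ₑ = h x / ‖f x‖ₑ :=
    Real.enorm_toReal ((div_le x).trans_lt enorm_lt_top).ne
  have k_meas : AEStronglyMeasurable k μ :=
    (h_meas.aemeasurable.div hf.enorm).ennreal_toReal.aestronglyMeasurable
  calc ∫⁻ x, ‖f x‖ₑ * ‖g x‖ₑ ∂μ
      = ∫⁻ x, h x ∂μ := lintegral_eq
    _ ≤ ∫⁻ x, ‖f x‖ₑ * ‖k x‖ₑ ∂μ :=
        lintegral_mono fun x ↦ (le_mul_div x).trans_eq (by rw [enorm_k])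
    _ = eLpNorm ((fun x ↦ ‖f x‖) • k) 1 μ := by
        simp only [eLpNorm_one_eq_lintegral_enorm, Pi.smul_apply', enorm_smul, enorm_norm]
    _ ≤ eLpNorm (fun x ↦ ‖f x‖) p μ * eLpNorm k q μ :=
        eLpNorm_smul_le_mul_eLpNorm k_meas hf.norm
    _ ≤ eLpNorm f p μ * eLpNorm g q μ := by
        rw [eLpNorm_norm]
        gcongr
        exact eLpNorm_mono_enorm fun x ↦ (enorm_k x).trans_le (div_le x)

end Holder

section Convolution

variable {A : Type*} [AddGroup A] [MeasurableSpace A] [MeasurableAdd A] [MeasurableNeg A]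
  {μ : Measure A} [μ.IsAddLeftInvariant] [μ.IsNegInvariant]

theorem eLpNorm_comp_sub_left {E : Type*} [NormedAddCommGroup E] (g : A → E) (p : ℝ≥0∞) (x : A) :
    eLpNorm (fun t ↦ g (x - t)) p μ = eLpNorm g p μ := by
  conv_rhs => rw [← Measure.map_sub_left_eq_self μ x]
  exact ((MeasurableEquiv.subLeft x).measurableEmbedding.eLpNorm_map_measure).symm

theorem enorm_convolution_le_eLpNorm_mul_eLpNorm {𝕜 E E' F : Type*} [NontriviallyNormedField 𝕜]
    [NormedAddCommGroup E] [NormedSpace 𝕜 E] [NormedAddCommGroup E'] [NormedSpace 𝕜 E']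
    [NormedAddCommGroup F] [NormedSpace 𝕜 F] [NormedSpace ℝ F]
    (L : E →L[𝕜] E' →L[𝕜] F) (p q : ℝ≥0∞) [p.HolderConjugate q]
    {f : A → E} (hf : AEStronglyMeasurable f μ) (g : A → E') (x : A) :
    ‖convolution f g L μ x‖ₑ ≤ ‖L‖ₑ * (eLpNorm f p μ * eLpNorm g q μ) := by
  calc ‖convolution f g L μ x‖ₑ
      ≤ ∫⁻ t, ‖L (f t) (g (x - t))‖ₑ ∂μ := enorm_integral_le_lintegral_enorm _
    _ ≤ ∫⁻ t, ‖L‖ₑ * (‖f t‖ₑ * ‖g (x - t)‖ₑ) ∂μ := by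
        refine lintegral_mono fun t ↦ ?_
        rw [← mul_assoc]
        exact (L (f t)).le_opENorm _ |>.trans (by gcongr; exact L.le_opENorm _)
    _ = ‖L‖ₑ * ∫⁻ t, ‖f t‖ₑ * ‖g (x - t)‖ₑ ∂μ := lintegral_const_mul' _ _ enorm_ne_top
    _ ≤ ‖L‖ₑ * (eLpNorm f p μ * eLpNorm g q μ) := by
        gcongr
        rw [← eLpNorm_comp_sub_left g q x]
        exact lintegral_enorm_mul_enorm_le_eLpNorm_mul_eLpNorm p q hf _

end Convolution

section Mollifier

theorem stdMollifier_eq_mul_expNegInvGlue (C : ℝ) (x : E3) :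
    stdMollifier C x = C * expNegInvGlue (1 - ‖x‖ ^ 2) := by
  have one_le_sq_iff : 1 - ‖x‖ ^ 2 ≤ 0 ↔ ¬‖x‖ < 1 := by
    rw [sub_nonpos, not_lt, one_le_sq_iff₀ (norm_nonneg x)]
  simp only [stdMollifier, expNegInvGlue, one_le_sq_iff, ite_not, mul_ite, mul_zero]
  rw [← neg_sub, one_div, inv_neg]

theorem continuous_stdMollifier (C : ℝ) : Continuous (stdMollifier C) := by
  simp only [funext (stdMollifier_eq_mul_expNegInvGlue C)]
  have := (expNegInvGlue.contDiff (n := 0)).continuous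
  fun_prop

theorem hasCompactSupport_stdMollifier (C : ℝ) : HasCompactSupport (stdMollifier C) := by
  refine HasCompactSupport.intro (isCompact_closedBall 0 1) fun x hx ↦ if_neg ?_
  exact fun hlt ↦ hx (mem_closedBall_zero_iff.2 hlt.le)

theorem continuous_mollifier (C ε : ℝ) : Continuous (mollifier C ε) :=
  continuous_const.mul ((continuous_stdMollifier C).comp (continuous_const_smul ε⁻¹))

theorem hasCompactSupport_mollifier (C : ℝ) {ε : ℝ} (hε : ε ≠ 0) :
    HasCompactSupport (mollifier C ε) :=
  ((hasCompactSupport_stdMollifier C).comp_smul (inv_ne_zero hε)).mul_left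

theorem memLp_mollifier (C : ℝ) {ε : ℝ} (hε : ε ≠ 0) (p : ℝ≥0∞) :
    MemLp (mollifier C ε) p volume :=
  (continuous_mollifier C ε).memLp_of_hasCompactSupport (hasCompactSupport_mollifier C hε)

theorem enorm_mollify_le (C ε : ℝ) (p q : ℝ≥0∞) [p.HolderConjugate q] (u : E3 → E3) (x : E3) :
    ‖mollify C ε u x‖ₑ ≤ eLpNorm (mollifier C ε) p volume * eLpNorm u q volume := by
  have enorm_lsmul : ‖(ContinuousLinearMap.lsmul ℝ ℝ : ℝ →L[ℝ] E3 →L[ℝ] E3)‖ₑ = 1 := by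
    rw [← ofReal_norm, ContinuousLinearMap.opNorm_lsmul, ENNReal.ofReal_one]
  simpa only [mollify, enorm_lsmul, one_mul] using
    enorm_convolution_le_eLpNorm_mul_eLpNorm (ContinuousLinearMap.lsmul ℝ ℝ) p q
      (continuous_mollifier C ε).aestronglyMeasurable u x

end Mollifier

section TrilinearForm

theorem enorm_euclidean_apply_le {ι : Type*} [Fintype ι] (x : EuclideanSpace ℝ ι) (i : ι) :
    ‖x i‖ₑ ≤ ‖x‖ₑ :=
  enorm_le_iff_norm_le.2 (PiLp.norm_apply_le x i)

theorem enorm_apply_single_le {ι κ : Type*} [Fintype ι] [DecidableEq ι] [Fintype κ]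
    (L : EuclideanSpace ℝ ι →L[ℝ] EuclideanSpace ℝ κ) (i : ι) (j : κ) :
    ‖L (EuclideanSpace.single i 1) j‖ₑ ≤ ‖L‖ₑ := by
  refine (enorm_euclidean_apply_le _ j).trans (enorm_le_iff_norm_le.2 ?_)
  simpa using L.le_opNorm (EuclideanSpace.single i (1 : ℝ))

variable {G : Set E3} {w v : E3 → E3}

theorem enorm_setIntegral_mul_fderiv_mul_le {M : ℝ≥0∞} (hM : M ≠ ∞) (hw : ∀ x, ‖w x‖ₑ ≤ M)
    (u : E3 → E3) (i j : Fin 3) :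
    ‖∫ x in G, w x i * fderiv ℝ v x (EuclideanSpace.single i 1) j * u x j‖ₑ ≤
      M * (eLpNorm (fderiv ℝ v) 2 (volume.restrict G) * Hnorm G u) := by
  calc ‖∫ x in G, w x i * fderiv ℝ v x (EuclideanSpace.single i 1) j * u x j‖ₑ
      ≤ ∫⁻ x in G, ‖w x i * fderiv ℝ v x (EuclideanSpace.single i 1) j * u x j‖ₑ :=
        enorm_integral_le_lintegral_enorm _
    _ ≤ ∫⁻ x in G, M * (‖fderiv ℝ v x‖ₑ * ‖u x‖ₑ) := by
        refine lintegral_mono fun x ↦ ?_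
        simp only [enorm_mul, mul_assoc]
        gcongr
        · exact (enorm_euclidean_apply_le _ i).trans (hw x)
        · exact enorm_apply_single_le _ i j
        · exact enorm_euclidean_apply_le _ j
    _ = M * ∫⁻ x in G, ‖fderiv ℝ v x‖ₑ * ‖u x‖ₑ := lintegral_const_mul' _ _ hM
    _ ≤ M * (eLpNorm (fderiv ℝ v) 2 (volume.restrict G) * Hnorm G u) := by
        gcongr
        exact lintegral_enorm_mul_enorm_le_eLpNorm_mul_eLpNorm 2 2
          (measurable_fderiv ℝ v).aestronglyMeasurable u

theorem enorm_triForm_le {M : ℝ≥0∞} (hM : M ≠ ∞) (hw : ∀ x, ‖w x‖ₑ ≤ M) (u : E3 → E3) :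
    ‖triForm G w v u‖ₑ ≤
      9 * (M * (eLpNorm (fderiv ℝ v) 2 (volume.restrict G) * Hnorm G u)) := by
  set B := M * (eLpNorm (fderiv ℝ v) 2 (volume.restrict G) * Hnorm G u)
  calc ‖triForm G w v u‖ₑ
      ≤ ∑ i : Fin 3, ∑ j : Fin 3,
          ‖∫ x in G, w x i * fderiv ℝ v x (EuclideanSpace.single i 1) j * u x j‖ₑ :=
        (enorm_sum_le _ _).trans (Finset.sum_le_sum fun i _ ↦ enorm_sum_le _ _)
    _ ≤ ∑ _i : Fin 3, ∑ _j : Fin 3, B :=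
        Finset.sum_le_sum fun i _ ↦ Finset.sum_le_sum fun j _ ↦
          enorm_setIntegral_mul_fderiv_mul_le hM hw u i j
    _ = 9 * B := by
        simp only [Finset.sum_const, Finset.card_univ, Fintype.card_fin, nsmul_eq_mul, ← mul_assoc]
        norm_num

theorem triForm_eq_zero_of_eLpNorm_fderiv_eq_zero
    (hv : eLpNorm (fderiv ℝ v) 2 (volume.restrict G) = 0) (w u : E3 → E3) :
    triForm G w v u = 0 := by
  have fderiv_ae_zero : fderiv ℝ v =ᵐ[volume.restrict G] 0 :=
    (eLpNorm_eq_zero_iff (measurable_fderiv ℝ v).aestronglyMeasurable two_ne_zero).1 hv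
  refine Finset.sum_eq_zero fun i _ ↦ Finset.sum_eq_zero fun j _ ↦ integral_eq_zero_of_ae ?_
  filter_upwards [fderiv_ae_zero] with x hx
  simp [hx]

theorem enorm_triForm_mollify_le (C ε : ℝ) {u : E3 → E3} (hu : ∀ x ∉ G, u x = 0) (v : E3 → E3) :
    ‖triForm G (mollify C ε u) v u‖ₑ ≤
      9 * (eLpNorm (mollifier C ε) 2 volume * Hnorm G u *
        (eLpNorm (fderiv ℝ v) 2 (volume.restrict G) * Hnorm G u)) := by
  have Hnorm_eq : Hnorm G u = eLpNorm u 2 volume :=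
    eLpNorm_restrict_eq_of_support_subset (Function.support_subset_iff'.2 hu)
  by_cases hv : eLpNorm (fderiv ℝ v) 2 (volume.restrict G) = 0
  · simp [triForm_eq_zero_of_eLpNorm_fderiv_eq_zero hv]
  by_cases hM : eLpNorm (mollifier C ε) 2 volume * Hnorm G u = ∞
  · have Hnorm_ne_zero : Hnorm G u ≠ 0 := fun h ↦ by simp [h] at hM
    rw [hM, ENNReal.top_mul (mul_ne_zero hv Hnorm_ne_zero), ENNReal.mul_top (by norm_num)]
    exact le_top
  · exact enorm_triForm_le hM (fun x ↦ Hnorm_eq ▸ enorm_mollify_le C ε 2 2 u x) u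

end TrilinearForm

theorem statement2_general (C : ℝ) {ε : ℝ} (hε : ε ≠ 0) :
    ∃ Cε : ℝ, 0 < Cε ∧
      ∀ (G : Set E3) (u v : E3 → E3), (∀ x ∉ G, u x = 0) →
        ENNReal.ofReal |triForm G (mollify C ε u) v u|
          ≤ ENNReal.ofReal Cε * Hnorm G u * Hnorm G u *
            eLpNorm (fderiv ℝ v) 2 (volume.restrict G) := by
  set K : ℝ≥0∞ := 9 * eLpNorm (mollifier C ε) 2 volume with hK
  have K_ne_top : K ≠ ∞ := ENNReal.mul_ne_top (by simp) (memLp_mollifier C hε 2).eLpNorm_ne_top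
  have K_le : K ≤ ENNReal.ofReal (K.toReal + 1) :=
    (ENNReal.le_ofReal_iff_toReal_le K_ne_top (by positivity)).2 (by linarith)
  refine ⟨K.toReal + 1, by positivity, fun G u v hu ↦ ?_⟩
  calc ENNReal.ofReal |triForm G (mollify C ε u) v u|
      = ‖triForm G (mollify C ε u) v u‖ₑ := (Real.enorm_eq_ofReal_abs _).symm
    _ ≤ 9 * (eLpNorm (mollifier C ε) 2 volume * Hnorm G u *
          (eLpNorm (fderiv ℝ v) 2 (volume.restrict G) * Hnorm G u)) :=
        enorm_triForm_mollify_le C ε hu v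
    _ = K * Hnorm G u * Hnorm G u * eLpNorm (fderiv ℝ v) 2 (volume.restrict G) := by
        rw [hK]; ring
    _ ≤ ENNReal.ofReal (K.toReal + 1) * Hnorm G u * Hnorm G u *
          eLpNorm (fderiv ℝ v) 2 (volume.restrict G) := by gcongr

/-- For every `ε > 0` there exists a constant `C_ε > 0` such that for all
`u, v ∈ V`, `|b(k_ε u, v, u)| ≤ C_ε ‖u‖ · |u| · ‖v‖`, where `|·|` is the `L²(G)` norm and
`‖·‖` is the `W^{1,2}₀(G)` norm. -/
theorem statement2
    (G : Set E3) (hGopen : IsOpen G) (hGbdd : Bornology.IsBounded G)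
    (C : ℝ) (hC : 0 < C) (hη : ∫ x, stdMollifier C x = 1)
    (ε : ℝ) (hε : 0 < ε) :
    ∃ Cε : ℝ, 0 < Cε ∧
      ∀ u v : E3 → E3, MemV G u → MemV G v →
        ENNReal.ofReal |triForm G (mollify C ε u) v u|
          ≤ ENNReal.ofReal Cε * Vnorm G u * Hnorm G u * Vnorm G v := by
  obtain ⟨Cε, hCε, bound⟩ := statement2_general C hε.ne'
  refine ⟨Cε, hCε, fun u v hu _ ↦ (bound G u v hu.1).trans ?_⟩
  gcongr
  exacts [le_self_add, le_add_self]

end
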